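/- Let n, t be positive integers with n ≥ 2t+1. If F ⊆ S_n is a t-cycle-intersecting family of permutations, then |F| ≤ (n−t)!, and equality holds if and only if F is the stabilizer of t points. -/

import Mathlib

open Equiv Finset
open scoped Classical

noncomputable section

/-- A common cycle of two permutations `σ` and `π`: a nonempty subset `B` invariant
under both, on which they agree, and on which `σ` acts as a single cycle. -/
def IsCommonCycle {n : ℕ} (σ π : Equiv.Perm (Fin n)) (B : Finset (Fin n)) : Prop :=
  B.Nonempty ∧ (∀ x ∈ B, σ x ∈ B) ∧ (∀ x ∈ B, π x ∈ B) ∧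
  (∀ x ∈ B, σ x = π x) ∧ (∀ x ∈ B, ∀ y ∈ B, σ.SameCycle x y)

/-- A family of permutations is `t`-cycle-intersecting if any two of its members
have at least `t` common cycles on pairwise disjoint subsets. -/
def TCycleIntersecting {n : ℕ} (t : ℕ) (F : Set (Equiv.Perm (Fin n))) : Prop :=
  ∀ σ ∈ F, ∀ π ∈ F, ∃ 𝒞 : Finset (Finset (Fin n)),
    t ≤ 𝒞.card ∧ (∀ B ∈ 𝒞, IsCommonCycle σ π B) ∧
    (𝒞 : Set (Finset (Fin n))).Pairwise fun A B => Disjoint A B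

/-- The `ij`-fixing of a permutation: if `σ i = j` then make `i` a fixed point and
send `σ⁻¹ i` to `j`, leaving everything else unchanged. -/
def ijFix {n : ℕ} (i j : Fin n) (σ : Equiv.Perm (Fin n)) : Equiv.Perm (Fin n) :=
  if σ i = j then σ * Equiv.swap i (σ⁻¹ i) else σ

/-- The `ij`-fixing operation on a family of permutations. -/
def fixFamOp {n : ℕ} (i j : Fin n) (A : Set (Equiv.Perm (Fin n))) :
    Set (Equiv.Perm (Fin n)) :=
  (fun σ => if ijFix i j σ ∈ A then σ else ijFix i j σ) '' A

/-- A family is fixed if it is closed under all `ij`-fixing operations. -/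
def IsFixedFam {n : ℕ} (A : Set (Equiv.Perm (Fin n))) : Prop :=
  ∀ i j : Fin n, i ≠ j → fixFamOp i j A = A

/-- The `(i,j)`-compression of a permutation: if `σ i ≠ i` and `σ j = j`, then
fix `i`, send `j` to `σ i` and `σ⁻¹ i` to `j`; otherwise leave `σ` unchanged. -/
def compPerm {n : ℕ} (i j : Fin n) (σ : Equiv.Perm (Fin n)) : Equiv.Perm (Fin n) :=
  if σ i ≠ i ∧ σ j = j then (Equiv.swap i (σ i) * Equiv.swap i j) * σ else σ

/-- The `(i,j)`-compression operation on a family of permutations. -/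
def compFam {n : ℕ} (i j : Fin n) (A : Set (Equiv.Perm (Fin n))) :
    Set (Equiv.Perm (Fin n)) :=
  (fun σ => if compPerm i j σ ∈ A then σ else compPerm i j σ) '' A

/-- A family is compressed if it is closed under all `(i,j)`-compressions. -/
def IsCompressedFam {n : ℕ} (A : Set (Equiv.Perm (Fin n))) : Prop :=
  ∀ i j : Fin n, i < j → compFam i j A = A

/-- `F` is the stabilizer of `t` points: there are `t` distinct points such that `F`
consists exactly of the permutations fixing all of them. -/
def IsTPointStabilizer {n : ℕ} (t : ℕ) (F : Set (Equiv.Perm (Fin n))) : Prop :=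
  ∃ a : Fin t ↪ Fin n, F = {σ | ∀ k, σ (a k) = a k}

/-- The set of fixed points of a permutation. -/
def fixSet {n : ℕ} (σ : Equiv.Perm (Fin n)) : Finset (Fin n) :=
  Finset.univ.filter fun x => σ x = x

/-- The up-permutation of a set `B`: all permutations fixing every element of `B`. -/
def UpSet {n : ℕ} (B : Finset (Fin n)) : Set (Equiv.Perm (Fin n)) :=
  {σ | ∀ x ∈ B, σ x = x}

/-- The up-permutation of a collection of sets. -/
def UpFam {n : ℕ} (g : Set (Finset (Fin n))) : Set (Equiv.Perm (Fin n)) :=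
  ⋃ B ∈ g, UpSet B

/-- `g` is a generating set for `F`: it contains no set of size `n-1` and
`Up(g) = F`. -/
def IsGenSet {n : ℕ} (g : Set (Finset (Fin n))) (F : Set (Equiv.Perm (Fin n))) : Prop :=
  (∀ B ∈ g, B.card ≠ n - 1) ∧ UpFam g = F

/-- `s⁺(B)`: the largest element of `B`, in the 1-based numbering of `[n] = {1,…,n}`
(so `s⁺(∅) = 0`). -/
def sPlus {n : ℕ} (B : Finset (Fin n)) : ℕ := B.sup fun x => (x : ℕ) + 1

/-- `s⁺(g) = max {s⁺(B) : B ∈ g}`. -/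
def sPlusFam {n : ℕ} (g : Set (Finset (Fin n))) : ℕ := sSup (sPlus '' g)

/-- `s_min(G(F)) = min {s⁺(g) : g a generating set of F}`. -/
def sMin {n : ℕ} (F : Set (Equiv.Perm (Fin n))) : ℕ :=
  sInf (sPlusFam '' {g | IsGenSet g F})

/-- `L(B)`: all sets obtained from `B` by left-shifting, i.e. sets of the same size
whose `i`-th smallest element is at most the `i`-th smallest element of `B`. -/
def LSet {n : ℕ} (B : Finset (Fin n)) : Set (Finset (Fin n)) :=
  {A | ∃ h : A.card = B.card, ∀ i : Fin B.card,
      A.orderEmbOfFin h i ≤ B.orderEmbOfFin rfl i}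

/-- `L(g) = ⋃_{B ∈ g} L(B)`. -/
def LFam {n : ℕ} (g : Set (Finset (Fin n))) : Set (Finset (Fin n)) :=
  ⋃ B ∈ g, LSet B

/-- `L_*(g)`: the minimal (under inclusion) elements of `L(g)`. -/
def Lstar {n : ℕ} (g : Set (Finset (Fin n))) : Set (Finset (Fin n)) :=
  {A | A ∈ LFam g ∧ ∀ A' ∈ LFam g, A' ⊆ A → A' = A}

/-- The interval `[m] = {1,…,m}` inside `Fin n` (1-based). -/
def Ival (n m : ℕ) : Finset (Fin n) := Finset.univ.filter fun x => (x : ℕ) < m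

/-- `D(E) = {σ : fix(σ) ∩ [s⁺(E)] = E}`. -/
def DSet {n : ℕ} (E : Finset (Fin n)) : Set (Equiv.Perm (Fin n)) :=
  {σ | fixSet σ ∩ Ival n (sPlus E) = E}

/-- The number of permutations of `m + r` points that move `m` specified points. -/
def partialDerangements : ℕ → ℕ → ℕ
  | m, 0 => numDerangements m
  | m, r + 1 => partialDerangements m r + partialDerangements (m + 1) r

theorem partialDerangements_add_two (r m : ℕ) :
    partialDerangements (m + 2) r =
      (m + 1 + r) * partialDerangements (m + 1) r + (m + 1) * partialDerangements m r := by
  induction r generalizing m with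
  | zero => simp only [partialDerangements, numDerangements_add_two]; ring
  | succ r ih =>
    simp only [partialDerangements]
    have h1 := ih m
    have h2 := ih (m + 1)
    have e : m + 1 + 2 = m + 2 + 1 := rfl
    rw [e] at h2
    have e' : m + 1 + 1 = m + 2 := rfl
    rw [e'] at *
    rw [h2]
    linarith

theorem partialDerangements_one (r : ℕ) :
    partialDerangements 1 r = r * partialDerangements 0 r := by
  induction r with
  | zero => simp [partialDerangements]
  | succ r ih =>
    have h := partialDerangements_add_two r 0
    simp only [partialDerangements] at h ⊢
    norm_num at h ⊢
    rw [h, ih]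
    ring

theorem partialDerangements_zero (r : ℕ) : partialDerangements 0 r = r.factorial := by
  induction r with
  | zero => simp [partialDerangements]
  | succ r ih =>
    simp only [partialDerangements, zero_add, partialDerangements_one, Nat.factorial_succ, ih]
    ring

theorem partialDerangements_pos {m : ℕ} (hm : 2 ≤ m) (r : ℕ) :
    0 < partialDerangements m r := by
  induction m, hm using Nat.le_induction with
  | base =>
    rw [partialDerangements_add_two, partialDerangements_zero]
    positivity
  | succ m hm ih =>
    obtain ⟨k, rfl⟩ := Nat.exists_eq_add_of_le' hm
    rw [partialDerangements_add_two]
    have : 0 < k + 1 + 1 + r := by omega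
    positivity

theorem partialDerangements_le_succ {m : ℕ} (hm : 1 ≤ m) (r : ℕ) :
    partialDerangements m r ≤ partialDerangements (m + 1) r := by
  obtain ⟨k, rfl⟩ := Nat.exists_eq_add_of_le' hm
  rw [partialDerangements_add_two]
  nlinarith [Nat.zero_le (partialDerangements k r), Nat.zero_le (partialDerangements (k + 1) r),
    Nat.zero_le ((k + r) * partialDerangements (k + 1) r),
    Nat.zero_le ((k + 1) * partialDerangements k r)]

theorem partialDerangements_lt_succ {m : ℕ} (hm : 2 ≤ m) (r : ℕ) :
    partialDerangements m r < partialDerangements (m + 1) r := by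
  have hp := partialDerangements_pos hm r
  obtain ⟨k, rfl⟩ := Nat.exists_eq_add_of_le' hm
  rw [show k + 2 + 1 = k + 1 + 2 from rfl, partialDerangements_add_two r (k + 1),
    show k + 1 + 1 = k + 2 from rfl]
  nlinarith [Nat.zero_le ((k + r) * partialDerangements (k + 2) r),
    Nat.zero_le ((k + 2) * partialDerangements (k + 1) r)]

/-- The arithmetic fact behind the pushing step for generators of the middle size: the only
tie is `m = 2`, `r = 0`, `t = 3`. -/
theorem middle_size_inequality {m r t : ℕ} (hm : 1 ≤ m) (hn : t + 1 ≤ 2 * m + r)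
    (h : m * partialDerangements (m + 1) r ≤ (m + t - 1) * partialDerangements m r) :
    m = 2 ∧ r = 0 ∧ t = 3 := by
  obtain ⟨k, rfl⟩ := Nat.exists_eq_add_of_le' hm
  rw [partialDerangements_add_two, show k + 1 + t - 1 = k + t by omega] at h
  set d := partialDerangements (k + 1) r
  have key : k + t ≤ (k + 1) * (k + 1 + r) := by
    rcases Nat.lt_or_ge k 1 with hk | hk
    · have : k = 0 := by omega
      subst this; omega
    · nlinarith [Nat.zero_le (k * r), mul_le_mul hk hk (by omega) (by omega)]
  have h0 : partialDerangements k r = 0 := by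
    by_contra hne
    have : 0 < partialDerangements k r := Nat.pos_of_ne_zero hne
    have h1 := Nat.mul_le_mul_right d key
    have : 0 < (k + 1) * ((k + 1) * partialDerangements k r) := by positivity
    nlinarith
  have hk : k = 1 := by
    by_contra hk
    rcases Nat.lt_or_ge k 1 with hk' | hk'
    · have : k = 0 := by omega
      subst this
      rw [partialDerangements_zero] at h0
      exact Nat.factorial_ne_zero _ h0
    · exact (partialDerangements_pos (by omega : 2 ≤ k) r).ne' h0
  subst hk
  have hr : r = 0 := by
    rw [partialDerangements_one, partialDerangements_zero] at h0
    simpa [Nat.factorial_ne_zero] using h0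
  subst hr
  have hd : d = 1 := by simp [d, partialDerangements, numDerangements_add_two]
  rw [hd, h0] at h
  omega

/-- A family of finite sets is `t`-intersecting if any two (possibly equal) members share at
least `t` elements. -/
def SetIntersecting {n : ℕ} (t : ℕ) (G : Finset (Finset (Fin n))) : Prop :=
  ∀ A ∈ G, ∀ B ∈ G, t ≤ #(A ∩ B)

/-- The total number of permutations whose fixed point set belongs to `G`. -/
def derangementWeight {n : ℕ} (G : Finset (Finset (Fin n))) : ℕ :=
  ∑ A ∈ G, numDerangements (n - #A)

/-- The secondary weight used to break ties between families of equal `derangementWeight`. -/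
def tieWeight {n : ℕ} (G : Finset (Finset (Fin n))) : ℕ :=
  ∑ A ∈ G, 3 ^ (n - #A)

theorem sum_powerset_numDerangements {α : Type*} (Q : Finset α) (m : ℕ) :
    ∑ R ∈ Q.powerset, numDerangements (m + #Q - #R) = partialDerangements m #Q := by
  induction Q using Finset.induction_on generalizing m with
  | empty => simp [partialDerangements]
  | insert a Q ha ih =>
    rw [sum_powerset_insert ha, card_insert_of_notMem ha, partialDerangements, ← ih m,
      ← ih (m + 1), add_comm]
    congr 1
    · refine sum_congr rfl fun R hR => ?_
      rw [card_insert_of_notMem fun h => ha (mem_powerset.1 hR h)]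
      congr 1
      omega
    · refine sum_congr rfl fun R hR => ?_
      congr 1
      omega

theorem sum_filter_sdiff_eq {n : ℕ} (f : ℕ → ℕ) {E Q : Finset (Fin n)} (h : Disjoint E Q) :
    ∑ Y : Finset (Fin n) with Y \ Q = E, f #Y = ∑ R ∈ Q.powerset, f (#E + #R) := by
  refine sum_nbij' (fun Y => Y ∩ Q) (fun R => E ∪ R) ?_ ?_ ?_ ?_ ?_
  · intro Y _
    simp
  · intro R hR
    rw [mem_powerset] at hR
    simp only [mem_filter, mem_univ, true_and, union_sdiff_distrib, sdiff_eq_empty_iff_subset.2 hR,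
      union_empty]
    exact sdiff_eq_self_of_disjoint h
  · intro Y hY
    simp only [mem_filter, mem_univ, true_and] at hY
    rw [← hY]
    exact sdiff_union_inter Y Q
  · intro R hR
    rw [mem_powerset] at hR
    rw [union_inter_distrib_right, disjoint_iff_inter_eq_empty.1 h, empty_union,
      inter_eq_left.2 hR]
  · intro Y hY
    simp only [mem_filter, mem_univ, true_and] at hY
    rw [← hY, card_sdiff_add_card_inter]

theorem sum_numDerangements_filter_sdiff_eq {n : ℕ} {E Q : Finset (Fin n)} (h : Disjoint E Q) :
    ∑ Y : Finset (Fin n) with Y \ Q = E, numDerangements (n - #Y) =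
      partialDerangements (n - #E - #Q) #Q := by
  rw [sum_filter_sdiff_eq (fun k => numDerangements (n - k)) h, ← sum_powerset_numDerangements]
  refine sum_congr rfl fun R hR => ?_
  have h1 := card_le_card (mem_powerset.1 hR)
  have h2 := card_le_univ (E ∪ Q)
  rw [card_union_of_disjoint h, Fintype.card_fin] at h2
  congr 1
  omega

theorem derangementWeight_filter_superset {n : ℕ} (T : Finset (Fin n)) :
    derangementWeight {A : Finset (Fin n) | T ⊆ A} = (n - #T).factorial := by
  have h := sum_numDerangements_filter_sdiff_eq (disjoint_compl_right (a := T))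
  rw [card_compl, Fintype.card_fin, Nat.sub_self, partialDerangements_zero] at h
  rw [derangementWeight, ← h]
  congr 1
  ext A
  simp [inter_eq_right]

theorem SetIntersecting.subset_of_card_le {n t : ℕ} {G : Finset (Finset (Fin n))}
    (hG : SetIntersecting t G) {T : Finset (Fin n)} (hT : T ∈ G) (hc : #T ≤ t) :
    ∀ A ∈ G, T ⊆ A := by
  intro A hA
  have h := hG T hT A hA
  have h1 : T ∩ A = T := eq_of_subset_of_card_le inter_subset_left (hc.trans h)
  exact inter_eq_left.1 h1

theorem sum_filter_sdiff_mem {n : ℕ} (w : Finset (Fin n) → ℕ) (S : Finset (Finset (Fin n)))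
    (Q : Finset (Fin n)) :
    ∑ Y : Finset (Fin n) with Y \ Q ∈ S, w Y =
      ∑ E ∈ S, ∑ Y : Finset (Fin n) with Y \ Q = E, w Y := by
  rw [← sum_fiberwise_of_maps_to (g := fun Y => Y \ Q) (t := S)]
  · refine sum_congr rfl fun E hE => sum_congr ?_ fun _ _ => rfl
    ext Y
    simp only [mem_filter, mem_univ, true_and, and_iff_right_iff_imp]
    rintro rfl
    exact hE
  · intro Y hY
    simpa using hY

/-- One step of a shift: replace `j` by `i` in `A`, unless this produces a member of `G`. -/
def shiftSet {n : ℕ} (i j : Fin n) (G : Finset (Finset (Fin n))) (A : Finset (Fin n)) :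
    Finset (Fin n) :=
  if j ∈ A ∧ i ∉ A ∧ insert i (A.erase j) ∉ G then insert i (A.erase j) else A

theorem card_insert_erase {α : Type*} [DecidableEq α] {i j : α} {A : Finset α}
    (hj : j ∈ A) (hi : i ∉ A) :
    #(insert i (A.erase j)) = #A := by
  rw [card_insert_of_notMem fun h => hi (mem_of_mem_erase h), card_erase_add_one hj]

theorem card_shiftSet {n : ℕ} (i j : Fin n) (G : Finset (Finset (Fin n))) (A : Finset (Fin n)) :
    #(shiftSet i j G A) = #A := by
  unfold shiftSet
  split_ifs with h
  · exact card_insert_erase h.1 h.2.1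
  · rfl

theorem shiftSet_injOn {n : ℕ} (i j : Fin n) (G : Finset (Finset (Fin n))) :
    Set.InjOn (shiftSet i j G) G := by
  intro A hA B hB h
  unfold shiftSet at h
  split_ifs at h with h1 h2 h2
  · have := congrArg (fun X => insert j (X.erase i)) h
    have e : ∀ X : Finset (Fin n), j ∈ X → i ∉ X →
        insert j ((insert i (X.erase j)).erase i) = X := by
      intro X hj hi
      rw [erase_insert fun h => hi (mem_of_mem_erase h), insert_erase hj]
    simpa only [e A h1.1 h1.2.1, e B h2.1 h2.2.1] using this
  · exact absurd (h ▸ hB) h1.2.2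
  · exact absurd (h ▸ hA) h2.2.2
  · exact h

theorem card_inter_insert_erase {α : Type*} [DecidableEq α] {i j : α} {A B : Finset α}
    (hiA : i ∉ A) (hiB : i ∉ B) :
    #(insert i (A.erase j) ∩ B) = #(A ∩ insert i (B.erase j)) := by
  congr 1
  ext x
  have h1 : x = i → x ∉ A := by rintro rfl; exact hiA
  have h2 : x = i → x ∉ B := by rintro rfl; exact hiB
  simp only [mem_inter, mem_insert, mem_erase]
  tauto

theorem SetIntersecting.card_le_shift_inter {n t : ℕ} {G : Finset (Finset (Fin n))}
    (hG : SetIntersecting t G) {i j : Fin n} {A B : Finset (Fin n)} (hA : A ∈ G) (hB : B ∈ G)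
    (hjA : j ∈ A) (hiA : i ∉ A) (h : ¬ (j ∈ B ∧ i ∉ B ∧ insert i (B.erase j) ∉ G)) :
    t ≤ #(insert i (A.erase j) ∩ B) := by
  by_cases hB' : j ∈ B ∧ i ∉ B
  · rw [card_inter_insert_erase hiA hB'.2]
    exact hG A hA _ (by tauto)
  · refine (hG A hA B hB).trans ?_
    by_cases hj : j ∈ B
    · have hi : i ∈ B := by tauto
      have e : insert i (A.erase j) ∩ B = insert i ((A ∩ B).erase j) := by
        ext x
        have h1 : x = i → x ∈ B := by rintro rfl; exact hi
        simp only [mem_inter, mem_insert, mem_erase]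
        tauto
      rw [e, card_insert_erase (mem_inter.2 ⟨hjA, hj⟩) fun h => hiA (mem_inter.1 h).1]
    · refine card_le_card fun x hx => ?_
      have h1 : x = j → x ∉ B := by rintro rfl; exact hj
      simp only [mem_inter, mem_insert, mem_erase] at hx ⊢
      tauto

theorem SetIntersecting.image_shiftSet {n t : ℕ} {G : Finset (Finset (Fin n))}
    (hG : SetIntersecting t G) (i j : Fin n) :
    SetIntersecting t (G.image (shiftSet i j G)) := by
  intro A' hA' B' hB'
  obtain ⟨A, hA, rfl⟩ := mem_image.1 hA'
  obtain ⟨B, hB, rfl⟩ := mem_image.1 hB'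
  unfold shiftSet
  split_ifs with h1 h2 h2
  · refine (hG A hA B hB).trans ?_
    have e : insert i ((A ∩ B).erase j) ⊆ insert i (A.erase j) ∩ insert i (B.erase j) := by
      intro x hx
      simp only [mem_inter, mem_insert, mem_erase] at hx ⊢
      tauto
    rw [← card_insert_erase (mem_inter.2 ⟨h1.1, h2.1⟩) fun h => h1.2.1 (mem_inter.1 h).1]
    exact card_le_card e
  · exact hG.card_le_shift_inter hA hB h1.1 h1.2.1 h2
  · rw [inter_comm]
    exact hG.card_le_shift_inter hB hA h2.1 h2.2.1 h1
  · exact hG A hA B hB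

theorem sum_card_image_shiftSet {n : ℕ} (f : ℕ → ℕ) (i j : Fin n)
    (G : Finset (Finset (Fin n))) :
    ∑ A ∈ G.image (shiftSet i j G), f #A = ∑ A ∈ G, f #A := by
  rw [sum_image (shiftSet_injOn i j G)]
  simp only [card_shiftSet]

theorem sum_val_shiftSet_le {n : ℕ} {i j : Fin n} (hij : i < j) (G : Finset (Finset (Fin n)))
    (A : Finset (Fin n)) :
    ∑ x ∈ shiftSet i j G A, (x : ℕ) ≤ ∑ x ∈ A, (x : ℕ) := by
  unfold shiftSet
  split_ifs with h
  · rw [sum_insert fun h' => h.2.1 (mem_of_mem_erase h'), ← add_sum_erase A _ h.1]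
    have : (i : ℕ) < j := hij
    omega
  · rfl

/-- A family none of whose shifts to the left has smaller element sum is closed under shifts. -/
theorem insert_erase_mem_of_sum_min {n : ℕ} {i j : Fin n} (hij : i < j)
    {G : Finset (Finset (Fin n))}
    (hmin : ∑ A ∈ G, ∑ x ∈ A, (x : ℕ) ≤
      ∑ A ∈ G.image (shiftSet i j G), ∑ x ∈ A, (x : ℕ))
    {A : Finset (Fin n)} (hA : A ∈ G) (hj : j ∈ A) (hi : i ∉ A) :
    insert i (A.erase j) ∈ G := by
  by_contra hne
  rw [sum_image (shiftSet_injOn i j G)] at hmin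
  refine absurd hmin (not_le.2 (sum_lt_sum (fun B _ => sum_val_shiftSet_le hij G B) ⟨A, hA, ?_⟩))
  rw [shiftSet, if_pos ⟨hj, hi, hne⟩, sum_insert fun h' => hi (mem_of_mem_erase h'),
    ← add_sum_erase A _ hj]
  have : (i : ℕ) < j := hij
  omega

/-- A `t`-intersecting family of sets of size greater than `t` which has the largest
`derangementWeight` among all `t`-intersecting families, breaks ties optimally, and is closed
under left shifts. -/
structure IsExtremalFamily {n : ℕ} (t : ℕ) (G : Finset (Finset (Fin n))) : Prop where
  int : SetIntersecting t G
  lt_card : ∀ A ∈ G, t + 1 ≤ #A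
  weight_max : ∀ G' : Finset (Finset (Fin n)), SetIntersecting t G' →
    derangementWeight G' ≤ derangementWeight G
  tie_max : ∀ G' : Finset (Finset (Fin n)), SetIntersecting t G' → (∀ A ∈ G', t + 1 ≤ #A) →
    derangementWeight G' = derangementWeight G → tieWeight G' ≤ tieWeight G
  shift : ∀ i j, i < j → ∀ A ∈ G, j ∈ A → i ∉ A → insert i (A.erase j) ∈ G

theorem derangementWeight_mono {n : ℕ} {G G' : Finset (Finset (Fin n))} (h : G ⊆ G') :
    derangementWeight G ≤ derangementWeight G' :=
  sum_le_sum_of_subset h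

theorem SetIntersecting.derangementWeight_le {n t : ℕ} {G : Finset (Finset (Fin n))}
    (hG : SetIntersecting t G) {T : Finset (Fin n)} (hT : T ∈ G) (hc : #T ≤ t) :
    derangementWeight G ≤ (n - t).factorial := by
  have h : #T = t := le_antisymm hc (by simpa using hG T hT T hT)
  rw [← h, ← derangementWeight_filter_superset]
  refine derangementWeight_mono fun A hA => ?_
  simpa using hG.subset_of_card_le hT hc A hA

theorem exists_isExtremalFamily {n t : ℕ} {G : Finset (Finset (Fin n))}
    (hG : SetIntersecting t G) (hc : ∀ A ∈ G, t + 1 ≤ #A)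
    (hw : (n - t).factorial ≤ derangementWeight G) :
    ∃ G' : Finset (Finset (Fin n)), IsExtremalFamily t G' ∧
      (n - t).factorial ≤ derangementWeight G' := by
  let S₀ : Finset (Finset (Finset (Fin n))) :=
    {G | SetIntersecting t G ∧ ∀ A ∈ G, t + 1 ≤ #A}
  obtain ⟨G₁, h₁, max₁⟩ := exists_max_image S₀ derangementWeight ⟨G, by simp [S₀, hG]; exact hc⟩
  obtain ⟨G₂, h₂, max₂⟩ := exists_max_image
    (S₀.filter fun G => derangementWeight G = derangementWeight G₁) tieWeight
    ⟨G₁, by simp [h₁]⟩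
  obtain ⟨G₃, h₃, min₃⟩ := exists_min_image
    (S₀.filter fun G => derangementWeight G = derangementWeight G₁ ∧ tieWeight G = tieWeight G₂)
    (fun G => ∑ A ∈ G, ∑ x ∈ A, (x : ℕ)) ⟨G₂, by simpa using h₂⟩
  simp only [mem_filter, S₀, mem_univ, true_and, and_imp] at h₁ max₁ h₂ max₂ h₃ min₃
  obtain ⟨⟨hint, hcard⟩, hw₃, ht₃⟩ := h₃
  have hle : (n - t).factorial ≤ derangementWeight G₃ := hw₃ ▸ hw.trans (max₁ G hG hc)
  refine ⟨G₃, ⟨hint, hcard, ?_, ?_, ?_⟩, hle⟩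
  · intro G' hG'
    by_cases hc' : ∀ A ∈ G', t + 1 ≤ #A
    · exact hw₃ ▸ max₁ G' hG' hc'
    · push Not at hc'
      obtain ⟨T, hT, hT'⟩ := hc'
      exact (hG'.derangementWeight_le hT (by omega)).trans hle
  · intro G' hG' hc' he
    exact ht₃ ▸ max₂ G' hG' hc' (he.trans hw₃)
  · intro i j hij A hA hj hi
    refine insert_erase_mem_of_sum_min hij (min₃ _ (hint.image_shiftSet i j) ?_ ?_ ?_) hA hj hi
    · intro B hB
      obtain ⟨A, hA, rfl⟩ := mem_image.1 hB
      rw [card_shiftSet]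
      exact hcard A hA
    · rw [← hw₃]
      exact sum_card_image_shiftSet (fun k => numDerangements (n - k)) i j G₃
    · rw [← ht₃]
      exact sum_card_image_shiftSet (fun k => 3 ^ (n - k)) i j G₃

theorem IsExtremalFamily.mem_of_subset {n t : ℕ} {G : Finset (Finset (Fin n))}
    (hG : IsExtremalFamily t G) {A B : Finset (Fin n)} (hA : A ∈ G) (hAB : A ⊆ B) : B ∈ G := by
  by_contra hB
  have hint : SetIntersecting t (insert B G) := by
    intro X hX Y hY
    have key : ∀ Z ∈ G, t ≤ #(B ∩ Z) := fun Z hZ =>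
      (hG.int A hA Z hZ).trans (card_le_card (inter_subset_inter_right hAB))
    have hBt : t ≤ #(B ∩ B) := (key A hA).trans
      (card_le_card (inter_subset_inter_left hAB))
    rcases mem_insert.1 hX with rfl | hX' <;> rcases mem_insert.1 hY with rfl | hY'
    · exact hBt
    · exact key Y hY'
    · rw [inter_comm]; exact key X hX'
    · exact hG.int X hX' Y hY'
  have hcard : ∀ X ∈ insert B G, t + 1 ≤ #X := by
    intro X hX
    rcases mem_insert.1 hX with rfl | hX
    · exact (hG.lt_card A hA).trans (card_le_card hAB)
    · exact hG.lt_card X hX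
  have hw : derangementWeight (insert B G) = derangementWeight G :=
    le_antisymm (hG.weight_max _ hint) (derangementWeight_mono (subset_insert _ _))
  have h := hG.tie_max _ hint hcard hw
  rw [tieWeight, sum_insert hB, tieWeight] at h
  have : 0 < 3 ^ (n - #B) := by positivity
  omega

/-- `s` is the largest coordinate on which membership in `G` depends. -/
def IsTopCoordinate {n : ℕ} (G : Finset (Finset (Fin n))) (s : Fin n) : Prop :=
  (∃ A ∈ G, s ∈ A ∧ A.erase s ∉ G) ∧ ∀ u, s < u → ∀ A ∈ G, u ∈ A → A.erase u ∈ G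

theorem exists_isTopCoordinate {n : ℕ} {G : Finset (Finset (Fin n))} (hne : G.Nonempty)
    (hG : ∀ A ∈ G, A.Nonempty) : ∃ s, IsTopCoordinate G s := by
  let S : Finset (Fin n) := {s | ∃ A ∈ G, s ∈ A ∧ A.erase s ∉ G}
  obtain ⟨A, hA, hmin⟩ := exists_min_image G card hne
  obtain ⟨a, ha⟩ := hG A hA
  have hS : S.Nonempty := by
    refine ⟨a, ?_⟩
    simp only [S, mem_filter, mem_univ, true_and]
    refine ⟨A, hA, ha, fun h => ?_⟩
    have := hmin _ h
    have := card_erase_lt_of_mem ha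
    omega
  obtain ⟨s, hs, hmax⟩ := exists_max_image S id hS
  refine ⟨s, by simpa [S] using hs, fun u hu A hA hua => ?_⟩
  by_contra hne
  have := hmax u (by simpa [S] using ⟨A, hA, hua, hne⟩)
  exact absurd hu (not_lt.2 this)

theorem IsTopCoordinate.sdiff_mem {n : ℕ} {G : Finset (Finset (Fin n))} {s : Fin n}
    (hs : IsTopCoordinate G s) {A : Finset (Fin n)} (hA : A ∈ G) : A \ Ioi s ∈ G := by
  have key : ∀ Q : Finset (Fin n), Q ⊆ Ioi s → A \ Q ∈ G := by
    intro Q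
    induction Q using Finset.induction_on with
    | empty => simpa using hA
    | insert a Q _ ih =>
      intro hQ
      rw [insert_subset_iff] at hQ
      rw [sdiff_insert]
      by_cases ha : a ∈ A \ Q
      · exact hs.2 a (mem_Ioi.1 hQ.1) _ (ih hQ.2) ha
      · rw [erase_eq_of_notMem ha]
        exact ih hQ.2
  exact key _ Subset.rfl

/-- The sets `E` below `s` such that `insert s E` belongs to `G` but `E` does not. -/
def lowerBoundary {n : ℕ} (G : Finset (Finset (Fin n))) (s : Fin n) :
    Finset (Finset (Fin n)) :=
  (Iio s).powerset.filter fun E => insert s E ∈ G ∧ E ∉ G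

theorem mem_lowerBoundary {n : ℕ} {G : Finset (Finset (Fin n))} {s : Fin n}
    {E : Finset (Fin n)} :
    E ∈ lowerBoundary G s ↔ E ⊆ Iio s ∧ insert s E ∈ G ∧ E ∉ G := by
  simp [lowerBoundary]

theorem IsTopCoordinate.lowerBoundary_nonempty {n : ℕ} {G : Finset (Finset (Fin n))}
    {s : Fin n} (hs : IsTopCoordinate G s)
    (hup : ∀ A ∈ G, ∀ B, A ⊆ B → B ∈ G) : (lowerBoundary G s).Nonempty := by
  obtain ⟨A, hA, hsA, hne⟩ := hs.1
  refine ⟨A.erase s \ Ioi s, mem_lowerBoundary.2 ⟨fun x hx => ?_, ?_, fun h => ?_⟩⟩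
  · simp only [mem_sdiff, mem_erase, mem_Ioi, not_lt] at hx
    exact mem_Iio.2 (lt_of_le_of_ne hx.2 hx.1.1)
  · convert hs.sdiff_mem hA using 1
    ext x
    by_cases hx : x = s
    · subst hx; simp [hsA]
    · simp [hx]
  · exact hne (hup _ h _ sdiff_subset)

/-- Replace the members of `G` lying over `insert s E` for `E ∈ C` by the sets lying over the
members of `B`. -/
def pushFamily {n : ℕ} (G : Finset (Finset (Fin n))) (s : Fin n)
    (B C : Finset (Finset (Fin n))) : Finset (Finset (Fin n)) :=
  (G.filter fun Y => Y \ Ioi s ∉ C.image (insert s)) ∪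
    univ.filter fun Y : Finset (Fin n) => Y \ Ioi s ∈ B

theorem notMem_of_subset_Iio {n : ℕ} {s : Fin n} {E : Finset (Fin n)} (h : E ⊆ Iio s) :
    s ∉ E := fun hs => lt_irrefl s (mem_Iio.1 (h hs))

theorem sum_pushFamily {n : ℕ} {G : Finset (Finset (Fin n))} {s : Fin n}
    (hs : IsTopCoordinate G s) (hup : ∀ A ∈ G, ∀ B, A ⊆ B → B ∈ G)
    {B C : Finset (Finset (Fin n))} (hB : B ⊆ lowerBoundary G s) (hC : C ⊆ lowerBoundary G s)
    (w : Finset (Fin n) → ℕ) :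
    ∑ Y ∈ pushFamily G s B C, w Y +
        ∑ E ∈ C, ∑ Y : Finset (Fin n) with Y \ Ioi s = insert s E, w Y =
      ∑ Y ∈ G, w Y + ∑ E ∈ B, ∑ Y : Finset (Fin n) with Y \ Ioi s = E, w Y := by
  rw [pushFamily, sum_union, ← sum_filter_sdiff_mem,
    ← sum_filter_not_add_sum_filter G (fun Y => Y \ Ioi s ∈ C.image (insert s))]
  · have h : ∑ E ∈ C, ∑ Y : Finset (Fin n) with Y \ Ioi s = insert s E, w Y =
        ∑ Y ∈ G with Y \ Ioi s ∈ C.image (insert s), w Y := by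
      rw [← sum_image (s := C) (g := insert s)
        (f := fun E => ∑ Y : Finset (Fin n) with Y \ Ioi s = E, w Y), ← sum_filter_sdiff_mem]
      · refine sum_congr ?_ fun _ _ => rfl
        ext Y
        simp only [mem_filter, mem_univ, true_and, iff_and_self, mem_image]
        rintro ⟨E, hE, h⟩
        exact hup _ (mem_lowerBoundary.1 (hC hE)).2.1 _ (h ▸ sdiff_subset)
      · intro E hE E' hE' h
        have e := congrArg (fun X => X.erase s) h
        simpa only [erase_insert (notMem_of_subset_Iio (mem_lowerBoundary.1 (hC hE)).1),
          erase_insert (notMem_of_subset_Iio (mem_lowerBoundary.1 (hC hE')).1)] using e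
    rw [h]
    ring
  · rw [disjoint_left]
    intro Y hY hY'
    simp only [mem_filter, mem_univ, true_and] at hY hY'
    exact (mem_lowerBoundary.1 (hB hY')).2.2 (hs.sdiff_mem hY.1)

theorem setIntersecting_pushFamily {n t : ℕ} {G : Finset (Finset (Fin n))} {s : Fin n}
    (hint : SetIntersecting t G) (hs : IsTopCoordinate G s)
    {B C : Finset (Finset (Fin n))} (hB : B ⊆ lowerBoundary G s)
    (hBB : ∀ E ∈ B, ∀ E' ∈ B, t ≤ #(E ∩ E'))
    (hBC : ∀ E ∈ B, ∀ E' ∈ lowerBoundary G s, E' ∉ C → t ≤ #(E ∩ E')) :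
    SetIntersecting t (pushFamily G s B C) := by
  have key : ∀ X Y : Finset (Fin n), X \ Ioi s ∈ B → Y ∈ G →
      Y \ Ioi s ∉ C.image (insert s) → t ≤ #(X ∩ Y) := by
    intro X Y hX hY hYC
    obtain ⟨hXs, hXG, hXG'⟩ := mem_lowerBoundary.1 (hB hX)
    have hsX := notMem_of_subset_Iio hXs
    have hY' := hs.sdiff_mem hY
    by_cases hE : (Y \ Ioi s).erase s ∈ G
    · refine (hint _ hXG _ hE).trans (card_le_card fun x hx => ?_)
      simp only [mem_inter, mem_insert, mem_erase, mem_sdiff] at hx ⊢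
      tauto
    · have hsY : s ∈ Y \ Ioi s := by
        by_contra h
        rw [erase_eq_of_notMem h] at hE
        exact hE hY'
      have hEb : (Y \ Ioi s).erase s ∈ lowerBoundary G s := by
        refine mem_lowerBoundary.2 ⟨fun x hx => ?_, by rwa [insert_erase hsY], hE⟩
        simp only [mem_sdiff, mem_erase, mem_Ioi, not_lt] at hx
        exact mem_Iio.2 (lt_of_le_of_ne hx.2.2 hx.1)
      refine (hBC _ hX _ hEb fun h => hYC ?_).trans (card_le_card fun x hx => ?_)
      · exact mem_image.2 ⟨_, h, insert_erase hsY⟩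
      · simp only [mem_inter, mem_erase, mem_sdiff] at hx ⊢
        tauto
  intro X hX Y hY
  simp only [pushFamily, mem_union, mem_filter, mem_univ, true_and] at hX hY
  rcases hX with hX | hX <;> rcases hY with hY | hY
  · exact hint X hX.1 Y hY.1
  · rw [inter_comm]; exact key Y X hY hX.1 hX.2
  · exact key X Y hX hY.1 hY.2
  · exact (hBB _ hX _ hY).trans (card_le_card (inter_subset_inter sdiff_subset sdiff_subset))

namespace IsExtremalFamily

variable {n t : ℕ} {G : Finset (Finset (Fin n))} {s : Fin n}

theorem le_card_of_mem_lowerBoundary (hG : IsExtremalFamily t G) {E : Finset (Fin n)}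
    (hE : E ∈ lowerBoundary G s) : t ≤ #E := by
  obtain ⟨h1, h2, -⟩ := mem_lowerBoundary.1 hE
  have := hG.lt_card _ h2
  rw [card_insert_of_notMem (notMem_of_subset_Iio h1)] at this
  omega

theorem le_card_inter_of_ne (hG : IsExtremalFamily t G) {E E' : Finset (Fin n)}
    (hE : E ∈ lowerBoundary G s) (hE' : E' ∈ lowerBoundary G s) {x : Fin n} (hx : x < s)
    (hxE : x ∉ E) (hxE' : x ∉ E') : t ≤ #(E ∩ E') := by
  obtain ⟨h1, h2, -⟩ := mem_lowerBoundary.1 hE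
  obtain ⟨h1', h2', -⟩ := mem_lowerBoundary.1 hE'
  have h := hG.shift x s hx _ h2' (mem_insert_self _ _) (by
    rw [mem_insert, not_or]; exact ⟨hx.ne, hxE'⟩)
  rw [erase_insert (notMem_of_subset_Iio h1')] at h
  have e : insert s E ∩ insert x E' = E ∩ E' := by
    ext y
    have hs := notMem_of_subset_Iio h1'
    simp only [mem_inter, mem_insert]
    constructor
    · rintro ⟨rfl | h3, rfl | h4⟩
      · exact absurd hx (lt_irrefl _)
      · exact absurd h4 hs
      · exact absurd h3 hxE
      · exact ⟨h3, h4⟩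
    · tauto
  rw [← e]
  exact hG.int _ h2 _ h

theorem le_card_inter_of_card_add_card_ne (hG : IsExtremalFamily t G) {E E' : Finset (Fin n)}
    (hE : E ∈ lowerBoundary G s) (hE' : E' ∈ lowerBoundary G s)
    (hne : #E + #E' ≠ s + t - 1) : t ≤ #(E ∩ E') := by
  by_cases hx : ∃ x, x < s ∧ x ∉ E ∧ x ∉ E'
  · obtain ⟨x, hx, h1, h2⟩ := hx
    exact hG.le_card_inter_of_ne hE hE' hx h1 h2
  · push Not at hx
    obtain ⟨h1, h2, -⟩ := mem_lowerBoundary.1 hE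
    obtain ⟨h1', h2', -⟩ := mem_lowerBoundary.1 hE'
    have hU : E ∪ E' = Iio s := by
      refine Subset.antisymm (union_subset h1 h1') fun x hxs => mem_union.2 ?_
      by_cases h : x ∈ E
      · exact Or.inl h
      · exact Or.inr (hx x (mem_Iio.1 hxs) h)
    have hc := card_union_add_card_inter E E'
    rw [hU, Fin.card_Iio] at hc
    have h3 := hG.int _ h2 _ h2'
    rw [← insert_inter_distrib, card_insert_of_notMem fun h =>
      notMem_of_subset_Iio h1 (mem_inter.1 h).1] at h3
    omega

theorem sum_partialDerangements_push (hs : IsTopCoordinate G s) (hG : IsExtremalFamily t G)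
    {B C : Finset (Finset (Fin n))} (hB : B ⊆ lowerBoundary G s) (hC : C ⊆ lowerBoundary G s) :
    derangementWeight (pushFamily G s B C) +
        ∑ E ∈ C, partialDerangements (s - #E) (n - 1 - s) =
      derangementWeight G + ∑ E ∈ B, partialDerangements (s - #E + 1) (n - 1 - s) := by
  have h := sum_pushFamily hs (fun A hA B => hG.mem_of_subset hA) hB hC
    (fun A => numDerangements (n - #A))
  have hQ : #(Ioi s) = n - 1 - s := Fin.card_Ioi s
  have hsn := s.isLt
  rw [derangementWeight, derangementWeight]
  convert h using 2
  · refine sum_congr rfl fun E hE => ?_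
    have hE' := (mem_lowerBoundary.1 (hC hE)).1
    rw [sum_numDerangements_filter_sdiff_eq, card_insert_of_notMem (notMem_of_subset_Iio hE'), hQ]
    · congr 1
      omega
    · rw [disjoint_left]
      intro x hx hx'
      rcases mem_insert.1 hx with rfl | hx
      · simp at hx'
      · exact lt_asymm (mem_Iio.1 (hE' hx)) (mem_Ioi.1 hx')
  · refine sum_congr rfl fun E hE => ?_
    have hE' := (mem_lowerBoundary.1 (hB hE)).1
    have hc := card_le_card hE'
    rw [Fin.card_Iio] at hc
    rw [sum_numDerangements_filter_sdiff_eq, hQ]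
    · congr 1
      omega
    · rw [disjoint_left]
      intro x hx hx'
      exact lt_asymm (mem_Iio.1 (hE' hx)) (mem_Ioi.1 hx')

theorem push_le (hG : IsExtremalFamily t G) (hs : IsTopCoordinate G s)
    {B C : Finset (Finset (Fin n))} (hB : B ⊆ lowerBoundary G s) (hC : C ⊆ lowerBoundary G s)
    (hBB : ∀ E ∈ B, ∀ E' ∈ B, t ≤ #(E ∩ E'))
    (hBC : ∀ E ∈ B, ∀ E' ∈ lowerBoundary G s, E' ∉ C → t ≤ #(E ∩ E')) :
    ∑ E ∈ B, partialDerangements (s - #E + 1) (n - 1 - s) ≤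
      ∑ E ∈ C, partialDerangements (s - #E) (n - 1 - s) := by
  have h1 := sum_partialDerangements_push hs hG hB hC
  have h2 := hG.weight_max _ (setIntersecting_pushFamily hG.int hs hB hBB hBC)
  omega

theorem push_tie_le (hG : IsExtremalFamily t G) (hs : IsTopCoordinate G s)
    {B C : Finset (Finset (Fin n))} (hB : B ⊆ lowerBoundary G s) (hC : C ⊆ lowerBoundary G s)
    (hBB : ∀ E ∈ B, ∀ E' ∈ B, t ≤ #(E ∩ E'))
    (hBC : ∀ E ∈ B, ∀ E' ∈ lowerBoundary G s, E' ∉ C → t ≤ #(E ∩ E'))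
    (heq : ∑ E ∈ B, partialDerangements (s - #E + 1) (n - 1 - s) =
      ∑ E ∈ C, partialDerangements (s - #E) (n - 1 - s))
    (hc : ∀ E ∈ B, t + 1 ≤ #E) (hlast : n - 1 - s = 0) :
    ∑ E ∈ B, 3 ^ (n - #E) ≤ ∑ E ∈ C, 3 ^ (n - (#E + 1)) := by
  have h1 := sum_partialDerangements_push hs hG hB hC
  have h2 := hG.tie_max _ (setIntersecting_pushFamily hG.int hs hB hBB hBC) (by
    intro Y hY
    simp only [pushFamily, mem_union, mem_filter, mem_univ, true_and] at hY
    rcases hY with hY | hY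
    · exact hG.lt_card Y hY.1
    · exact (hc _ hY).trans (card_le_card sdiff_subset)) (by omega)
  have h3 := sum_pushFamily hs (fun A hA B => hG.mem_of_subset hA) hB hC
    (fun A => 3 ^ (n - #A))
  have hQ : Ioi s = ∅ := by
    rw [← card_eq_zero, Fin.card_Ioi, hlast]
  simp only [hQ, sdiff_empty, filter_eq', mem_univ, if_true, sum_singleton] at h3
  have h4 : ∑ E ∈ C, 3 ^ (n - #(insert s E)) = ∑ E ∈ C, 3 ^ (n - (#E + 1)) :=
    sum_congr rfl fun E hE => by
      rw [card_insert_of_notMem (notMem_of_subset_Iio (mem_lowerBoundary.1 (hC hE)).1)]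
  rw [h4] at h3
  rw [tieWeight, tieWeight] at h2
  omega

theorem card_lt_of_mem_lowerBoundary (ht : 0 < t) (hn : 2 * t + 1 ≤ n)
    (hG : IsExtremalFamily t G) (hs : IsTopCoordinate G s) {E : Finset (Fin n)}
    (hE : E ∈ lowerBoundary G s) : #E < s := by
  have hsub := (mem_lowerBoundary.1 hE).1
  have hc := card_le_card hsub
  rw [Fin.card_Iio] at hc
  by_contra hlt
  have hEc : #E = s := by omega
  have hEs : E = Iio s := eq_of_subset_of_card_le hsub (by rw [Fin.card_Iio]; omega)
  have hB : ({E} : Finset (Finset (Fin n))) ⊆ lowerBoundary G s := by simpa using hE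
  have hC : (∅ : Finset (Finset (Fin n))) ⊆ lowerBoundary G s := empty_subset _
  have hBB : ∀ X ∈ ({E} : Finset (Finset (Fin n))), ∀ X' ∈ ({E} : Finset (Finset (Fin n))),
      t ≤ #(X ∩ X') := by
    simpa using hG.le_card_of_mem_lowerBoundary hE
  have hBC : ∀ X ∈ ({E} : Finset (Finset (Fin n))), ∀ E' ∈ lowerBoundary G s,
      E' ∉ (∅ : Finset (Finset (Fin n))) → t ≤ #(X ∩ E') := by
    intro X hX E' hE' _
    rw [mem_singleton.1 hX, hEs, inter_eq_right.2 (mem_lowerBoundary.1 hE').1]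
    exact hG.le_card_of_mem_lowerBoundary hE'
  have h1 := hG.push_le hs hB hC hBB hBC
  simp only [sum_singleton, sum_empty, hEc, Nat.sub_self, zero_add, partialDerangements_one,
    partialDerangements_zero, Nat.le_zero, mul_eq_zero, Nat.factorial_ne_zero, or_false] at h1
  have h2 := hG.push_tie_le hs hB hC hBB hBC (by simp [hEc, h1, partialDerangements_one])
    (by simp only [mem_singleton, forall_eq]; omega) h1
  simp only [sum_singleton, sum_empty] at h2
  have : 0 < 3 ^ (n - #E) := by positivity
  omega

theorem two_mul_card_eq (ht : 0 < t) (hn : 2 * t + 1 ≤ n)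
    (hG : IsExtremalFamily t G) (hs : IsTopCoordinate G s) {E : Finset (Fin n)}
    (hE : E ∈ lowerBoundary G s) : 2 * #E = s + t - 1 := by
  by_contra hne
  set r := n - 1 - (s : ℕ)
  let level : ℕ → Finset (Finset (Fin n)) := fun k => (lowerBoundary G s).filter fun X => #X = k
  have hsub : ∀ k, level k ⊆ lowerBoundary G s := fun k => filter_subset _ _
  have push : ∀ i j, 2 * i ≠ s + t - 1 → i + j = s + t - 1 →
      #(level i) * partialDerangements (s - i + 1) r ≤
        #(level j) * partialDerangements (s - j) r := by
    intro i j hi hij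
    have h := hG.push_le hs (hsub i) (hsub j)
      (by
        intro X hX Y hY
        simp only [level, mem_filter] at hX hY
        exact hG.le_card_inter_of_card_add_card_ne hX.1 hY.1 (by omega))
      (by
        intro X hX Y hY hY'
        simp only [level, mem_filter, not_and] at hX hY'
        have := hY' hY
        exact hG.le_card_inter_of_card_add_card_ne hX.1 hY (by omega))
    rw [sum_congr rfl (g := fun _ => partialDerangements (s - i + 1) r)
        fun X hX => by rw [(mem_filter.1 hX).2],
      sum_congr (s₁ := level j) rfl (g := fun _ => partialDerangements (s - j) r)
        fun X hX => by rw [(mem_filter.1 hX).2]] at h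
    simpa using h
  have h1 := hG.le_card_of_mem_lowerBoundary hE
  have h2 := hG.card_lt_of_mem_lowerBoundary ht hn hs hE
  have hpos : 0 < #(level #E) := card_pos.2 ⟨E, by simp [level, hE]⟩
  obtain ⟨j, hj⟩ : ∃ j, #E + j = s + t - 1 := ⟨s + t - 1 - #E, by omega⟩
  have hij := push #E j (by omega) hj
  have hji := push j #E (by omega) (by omega)
  obtain ⟨m, hm⟩ : ∃ m, m = s - #E := ⟨_, rfl⟩
  obtain ⟨m', hm'⟩ : ∃ m', m' = s - j := ⟨_, rfl⟩
  rw [← hm, ← hm'] at hij hji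
  set a := #(level #E)
  set b := #(level j)
  have l1 := Nat.mul_le_mul_left b (partialDerangements_le_succ (by omega : 1 ≤ m') r)
  have l2 := Nat.mul_le_mul_left a (partialDerangements_le_succ (by omega : 1 ≤ m) r)
  rcases Nat.lt_or_ge m 2 with hm2 | hm2
  · have hlt := partialDerangements_lt_succ (by omega : 2 ≤ m') r
    rcases Nat.eq_zero_or_pos b with hb | hb
    · have := Nat.mul_pos hpos (partialDerangements_pos (by omega : 2 ≤ m + 1) r)
      rw [hb, zero_mul] at hij
      omega
    · have := Nat.mul_lt_mul_of_pos_left hlt hb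
      omega
  · have := Nat.mul_lt_mul_of_pos_left (partialDerangements_lt_succ hm2 r) hpos
    omega

end IsExtremalFamily

theorem sum_card_filter_notMem {n : ℕ} (S : Finset (Finset (Fin n))) (P : Finset (Fin n)) {m : ℕ}
    (h : ∀ E ∈ S, #(P \ E) = m) :
    ∑ x ∈ P, #{E ∈ S | x ∉ E} = #S * m := by
  simp only [card_filter]
  rw [sum_comm, ← smul_eq_mul, ← sum_const]
  refine sum_congr rfl fun E hE => ?_
  rw [← card_filter, ← h E hE, filter_notMem_eq_sdiff]

theorem IsExtremalFamily.not_isTopCoordinate {n t : ℕ} (ht : 0 < t) (hn : 2 * t + 1 ≤ n)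
    {G : Finset (Finset (Fin n))} {s : Fin n} (hG : IsExtremalFamily t G) :
    ¬ IsTopCoordinate G s := by
  intro hs
  set S := lowerBoundary G s
  set r := n - 1 - (s : ℕ) with hr
  have hsn := s.isLt
  obtain ⟨E₀, hE₀⟩ := hs.lowerBoundary_nonempty fun A hA B => hG.mem_of_subset hA
  have hS : 0 < #S := card_pos.2 ⟨E₀, hE₀⟩
  have hlt := hG.card_lt_of_mem_lowerBoundary ht hn hs hE₀
  have hcard₀ := hG.two_mul_card_eq ht hn hs hE₀
  obtain ⟨m, hm⟩ : ∃ m, m = s - #E₀ := ⟨_, rfl⟩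
  have hcard : ∀ E ∈ S, #E = m + t - 1 := fun E hE => by
    have := hG.two_mul_card_eq ht hn hs hE
    omega
  have hsm : ∀ E ∈ S, s - #E = m := fun E hE => by
    have := hcard E hE
    omega
  have hsum : ∑ x ∈ Iio s, #{E ∈ S | x ∉ E} = #S * m := by
    refine sum_card_filter_notMem S (Iio s) fun E hE => ?_
    rw [card_sdiff_of_subset (mem_lowerBoundary.1 hE).1, Fin.card_Iio]
    exact hsm E hE
  have hsplit : ∀ x, #{E ∈ S | x ∉ E} + #{E ∈ S | ¬ x ∉ E} = #S := fun x =>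
    card_filter_add_card_filter_not _
  have hBB : ∀ x ∈ Iio s, ∀ E ∈ S.filter (x ∉ ·), ∀ E' ∈ S.filter (x ∉ ·), t ≤ #(E ∩ E') := by
    intro x hx E hE E' hE'
    rw [mem_filter] at hE hE'
    exact hG.le_card_inter_of_ne hE.1 hE'.1 (mem_Iio.1 hx) hE.2 hE'.2
  have hBC : ∀ x ∈ Iio s, ∀ E ∈ S.filter (x ∉ ·), ∀ E' ∈ S, E' ∉ S.filter (¬ x ∉ ·) →
      t ≤ #(E ∩ E') := by
    intro x hx E hE E' hE' hE''
    refine hBB x hx E hE E' (mem_filter.2 ⟨hE', fun h => hE'' (mem_filter.2 ⟨hE', ?_⟩)⟩)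
    exact not_not.2 h
  have sum₁ : ∀ x, ∑ E ∈ S.filter (x ∉ ·), partialDerangements (s - #E + 1) r =
      #{E ∈ S | x ∉ E} * partialDerangements (m + 1) r := fun x => by
    rw [← smul_eq_mul, ← sum_const]
    exact sum_congr rfl fun E hE => by rw [hsm E (mem_filter.1 hE).1]
  have sum₂ : ∀ x, ∑ E ∈ S.filter (¬ x ∉ ·), partialDerangements (s - #E) r =
      #{E ∈ S | ¬ x ∉ E} * partialDerangements m r := fun x => by
    rw [← smul_eq_mul, ← sum_const]
    exact sum_congr rfl fun E hE => by rw [hsm E (mem_filter.1 hE).1]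
  have hpush : ∀ x ∈ Iio s, #{E ∈ S | x ∉ E} * partialDerangements (m + 1) r ≤
      #{E ∈ S | ¬ x ∉ E} * partialDerangements m r := by
    intro x hx
    rw [← sum₁, ← sum₂]
    exact hG.push_le hs (filter_subset _ _) (filter_subset _ _) (hBB x hx) (hBC x hx)
  have htotal : #S * m * (partialDerangements (m + 1) r + partialDerangements m r) ≤
      s * (#S * partialDerangements m r) := by
    rw [← hsum, sum_mul]
    refine (sum_le_card_nsmul _ _ (#S * partialDerangements m r) fun x hx => ?_).trans
      (by rw [Fin.card_Iio, smul_eq_mul])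
    rw [← hsplit x, mul_add, add_mul]
    have := hpush x hx
    omega
  have hmid : m * partialDerangements (m + 1) r ≤ (m + t - 1) * partialDerangements m r := by
    have hs2 : (s : ℕ) = m + t - 1 + m := by omega
    rw [hs2] at htotal
    have : #S * (m * partialDerangements (m + 1) r) ≤
        #S * ((m + t - 1) * partialDerangements m r) := by linarith
    exact Nat.le_of_mul_le_mul_left this hS
  obtain ⟨rfl, hr0, rfl⟩ := middle_size_inequality (by omega) (by omega) hmid
  have d2 : partialDerangements 2 r = 1 := by
    simp [hr0, partialDerangements, numDerangements_add_two]
  have d3 : partialDerangements (2 + 1) r = 2 := by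
    simp [hr0, partialDerangements, numDerangements_add_two]
  have hstrict : ∀ x ∈ Iio s, 3 * #{E ∈ S | x ∉ E} < #S := by
    intro x hx
    have h := hpush x hx
    rw [d2, d3] at h
    have h' := hsplit x
    by_contra hge
    have heq : #{E ∈ S | ¬ x ∉ E} = 2 * #{E ∈ S | x ∉ E} := by omega
    have htie := hG.push_tie_le hs (filter_subset (x ∉ ·) S) (filter_subset (¬ x ∉ ·) S)
      (hBB x hx) (hBC x hx) (by rw [sum₁, sum₂, d2, d3]; omega)
      (fun E hE => by rw [hcard E (mem_filter.1 hE).1]) hr0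
    have hn7 : n = 7 := by omega
    rw [sum_congr rfl (g := fun _ => 27) fun E hE => by
        rw [hcard E (mem_filter.1 hE).1, hn7]; rfl,
      sum_congr (s₁ := S.filter (¬ x ∉ ·)) rfl (g := fun _ => 9) fun E hE => by
        rw [hcard E (mem_filter.1 hE).1, hn7]; rfl] at htie
    simp only [sum_const, smul_eq_mul] at htie
    omega
  have hs6 : (s : ℕ) = 6 := by omega
  have hne : (Iio s).Nonempty := card_pos.1 (by rw [Fin.card_Iio]; omega)
  have := sum_lt_sum_of_nonempty hne hstrict
  rw [← mul_sum, hsum, sum_const, Fin.card_Iio, hs6, smul_eq_mul] at this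
  omega

theorem derangementWeight_lt {n t : ℕ} (ht : 0 < t) (hn : 2 * t + 1 ≤ n)
    {G : Finset (Finset (Fin n))} (hG : SetIntersecting t G) (hc : ∀ A ∈ G, t + 1 ≤ #A) :
    derangementWeight G < (n - t).factorial := by
  by_contra! h
  obtain ⟨G', hG', hw⟩ := exists_isExtremalFamily hG hc h
  have hne : G'.Nonempty := by
    by_contra hne
    rw [not_nonempty_iff_eq_empty] at hne
    rw [hne, derangementWeight, sum_empty] at hw
    exact absurd hw (not_le.2 (Nat.factorial_pos _))
  obtain ⟨s, hs⟩ := exists_isTopCoordinate hne fun A hA =>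
    card_pos.1 ((Nat.succ_pos t).trans_le (hG'.lt_card A hA))
  exact hG'.not_isTopCoordinate ht hn hs

/-- The weighted intersection theorem for sets of fixed points, with uniqueness. -/
theorem SetIntersecting.derangementWeight_bound {n t : ℕ} (ht : 0 < t) (hn : 2 * t + 1 ≤ n)
    {G : Finset (Finset (Fin n))} (hG : SetIntersecting t G) :
    derangementWeight G ≤ (n - t).factorial ∧
      (derangementWeight G = (n - t).factorial → ∃ T, #T = t ∧ ∀ A ∈ G, T ⊆ A) := by
  by_cases hc : ∀ A ∈ G, t + 1 ≤ #A
  · have h := derangementWeight_lt ht hn hG hc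
    exact ⟨h.le, fun h' => absurd h' h.ne⟩
  · push Not at hc
    obtain ⟨T, hT, hT'⟩ := hc
    have h : #T ≤ t := by omega
    exact ⟨hG.derangementWeight_le hT h, fun _ => ⟨T, le_antisymm h (by simpa using hG T hT T hT),
      hG.subset_of_card_le hT h⟩⟩

theorem card_filter_fixSet_eq {n : ℕ} (A : Finset (Fin n)) :
    #{σ : Perm (Fin n) | fixSet σ = A} = numDerangements (n - #A) := by
  rw [← Fintype.card_subtype]
  have e := Fintype.card_congr (derangements.subtypeEquiv fun x => x ∉ A)
  rw [card_derangements_eq_numDerangements, Fintype.card_subtype_compl, Fintype.card_fin,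
    Fintype.card_coe] at e
  rw [e]
  refine Fintype.card_congr (Equiv.subtypeEquivRight fun σ => ?_)
  simp only [Finset.ext_iff, fixSet, mem_filter, mem_univ, true_and, not_not,
    Function.mem_fixedPoints, Function.IsFixedPt]
  exact ⟨fun h a => (h a).symm, fun h a => (h a).symm⟩

theorem card_filter_fix_eq {n : ℕ} (T : Finset (Fin n)) :
    #{σ : Perm (Fin n) | ∀ x ∈ T, σ x = x} = (n - #T).factorial := by
  rw [← Fintype.card_subtype]
  have e := Fintype.card_congr (Equiv.Perm.subtypeEquivSubtypePerm fun x => x ∉ T)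
  rw [Fintype.card_perm, Fintype.card_subtype_compl, Fintype.card_fin, Fintype.card_coe] at e
  rw [e]
  exact Fintype.card_congr (Equiv.subtypeEquivRight fun σ => by simp)

theorem card_le_derangementWeight {n : ℕ} (F : Finset (Perm (Fin n))) :
    #F ≤ derangementWeight (F.image fixSet) := by
  rw [derangementWeight, card_eq_sum_card_image fixSet F]
  refine sum_le_sum fun A _ => ?_
  rw [← card_filter_fixSet_eq]
  exact card_le_card (filter_subset_filter _ (subset_univ F))

theorem IsCommonCycle.congr {n : ℕ} {σ π σ' π' : Perm (Fin n)} {B : Finset (Fin n)}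
    (h : IsCommonCycle σ π B) (hσ : ∀ x ∈ B, σ' x = σ x) (hπ : ∀ x ∈ B, π' x = π x) :
    IsCommonCycle σ' π' B := by
  obtain ⟨h1, h2, h3, h4, h5⟩ := h
  refine ⟨h1, fun x hx => hσ x hx ▸ h2 x hx, fun x hx => hπ x hx ▸ h3 x hx,
    fun x hx => by rw [hσ x hx, hπ x hx, h4 x hx], fun x hx y hy => ?_⟩
  obtain ⟨k, -, -, hk⟩ := (h5 x hx y hy).exists_pow_eq
  have key : ∀ k : ℕ, (σ ^ k) x ∈ B ∧ (σ' ^ k) x = (σ ^ k) x := by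
    intro k
    induction k with
    | zero => simpa using hx
    | succ k ih =>
      simp only [pow_succ', Perm.mul_apply, ih.2]
      exact ⟨h2 _ ih.1, hσ _ ih.1⟩
  exact ⟨k, by rw [zpow_natCast, (key k).2, hk]⟩

theorem IsCommonCycle.inv_mem {n : ℕ} {σ π : Perm (Fin n)} {B : Finset (Fin n)}
    (h : IsCommonCycle σ π B) {x : Fin n} (hx : σ x ∈ B) : x ∈ B := by
  have himg : B.image σ = B :=
    eq_of_subset_of_card_le (image_subset_iff.2 h.2.1) (card_image_of_injective _ σ.injective).ge
  rw [← himg] at hx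
  obtain ⟨y, hy, e⟩ := mem_image.1 hx
  rwa [← σ.injective e]

theorem IsCommonCycle.symm {n : ℕ} {σ π : Perm (Fin n)} {B : Finset (Fin n)}
    (h : IsCommonCycle σ π B) : IsCommonCycle π σ B := by
  obtain ⟨h1, h2, h3, h4, h5⟩ := h
  have h' : IsCommonCycle σ σ B := ⟨h1, h2, h2, fun _ _ => rfl, h5⟩
  have h'' := h'.congr (σ' := π) (π' := σ) (fun x hx => (h4 x hx).symm) fun _ _ => rfl
  exact h''

theorem isCommonCycle_singleton {n : ℕ} {σ π : Perm (Fin n)} {i : Fin n} (hσ : σ i = i)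
    (hπ : π i = i) : IsCommonCycle σ π {i} := by
  refine ⟨singleton_nonempty i, ?_, ?_, ?_, ?_⟩ <;> simp [hσ, hπ, Perm.SameCycle.refl]

/-- Pairwise disjoint sets all meeting `X` are at most `#X` in number. -/
theorem card_le_of_pairwise_disjoint_of_meets {α : Type*} {𝒞 : Finset (Finset α)}
    (hd : (𝒞 : Set (Finset α)).Pairwise fun A B => Disjoint A B) {X : Finset α}
    (h : ∀ B ∈ 𝒞, ∃ x ∈ B, x ∈ X) : #𝒞 ≤ #X := by
  rcases 𝒞.eq_empty_or_nonempty with rfl | ⟨B₀, hB₀⟩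
  · simp
  have : Nonempty α := ⟨(h B₀ hB₀).choose⟩
  choose! f hf using h
  refine card_le_card_of_injOn f (fun B hB => (hf B hB).2) fun A hA B hB e => ?_
  by_contra hne
  exact disjoint_left.1 (hd hA hB hne) (hf A hA).1 (e ▸ (hf B hB).1)

theorem ijFix_of_ne {n : ℕ} {i j : Fin n} {σ : Perm (Fin n)} (h : σ i ≠ j) :
    ijFix i j σ = σ := if_neg h

theorem ijFix_of_eq {n : ℕ} {i j : Fin n} {σ : Perm (Fin n)} (h : σ i = j) :
    ijFix i j σ = σ * Equiv.swap i (σ⁻¹ i) := if_pos h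

theorem ijFix_apply_self {n : ℕ} {i j : Fin n} {σ : Perm (Fin n)} (h : σ i = j) :
    ijFix i j σ i = i := by
  simp [ijFix_of_eq h]

theorem ijFix_apply_of_apply_eq {n : ℕ} {i j y : Fin n} {σ : Perm (Fin n)} (h : σ i = j)
    (hy : σ y = i) : ijFix i j σ y = j := by
  have : σ⁻¹ i = y := by rw [← hy]; simp
  simp [ijFix_of_eq h, this, h]

theorem ijFix_apply_of_ne {n : ℕ} {i j x : Fin n} {σ : Perm (Fin n)} (hx : x ≠ i)
    (hx' : σ x ≠ i) : ijFix i j σ x = σ x := by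
  by_cases h : σ i = j
  · have : x ≠ σ⁻¹ i := fun e => hx' (by rw [e]; simp)
    rw [ijFix_of_eq h, Perm.mul_apply, swap_apply_of_ne_of_ne hx this]
  · rw [ijFix_of_ne h]

theorem IsCommonCycle.ijFix_congr {n : ℕ} {σ π : Perm (Fin n)} {B : Finset (Fin n)}
    (h : IsCommonCycle σ π B) {i : Fin n} (hi : i ∉ B) (j : Fin n) :
    ∀ x ∈ B, ijFix i j σ x = σ x := fun x hx =>
  ijFix_apply_of_ne (fun e => hi (e ▸ hx)) fun e => hi (e ▸ h.2.1 x hx)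

theorem ijFix_injOn {n : ℕ} {i j : Fin n} {σ π : Perm (Fin n)} (hσ : σ i = j) (hπ : π i = j)
    (h : ijFix i j σ = ijFix i j π) : σ = π := by
  have key : ∀ ρ : Perm (Fin n), ρ i = j →
      ρ = ijFix i j ρ * Equiv.swap i ((ijFix i j ρ)⁻¹ j) := by
    intro ρ hρ
    have : (ijFix i j ρ)⁻¹ j = ρ⁻¹ i := by
      rw [Perm.inv_eq_iff_eq, ijFix_apply_of_apply_eq hρ (by simp)]
    rw [this, ijFix_of_eq hρ, mul_assoc, Equiv.swap_mul_self, mul_one]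
  rw [key σ hσ, key π hπ, h]

/-- The effect of the `ij`-fixing of the family `F` on a single member. -/
def fixMember {n : ℕ} (i j : Fin n) (F : Finset (Perm (Fin n))) (σ : Perm (Fin n)) :
    Perm (Fin n) :=
  if ijFix i j σ ∈ F then σ else ijFix i j σ

theorem fixMember_injOn {n : ℕ} (i j : Fin n) (F : Finset (Perm (Fin n))) :
    Set.InjOn (fixMember i j F) F := by
  have moved : ∀ σ ∈ F, ijFix i j σ ∉ F → σ i = j := fun σ hσ h => by
    by_contra hne
    rw [ijFix_of_ne hne] at h
    exact h hσ
  intro σ hσ π hπ h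
  rw [mem_coe] at hσ hπ
  unfold fixMember at h
  split_ifs at h with h1 h2 h2
  · exact h
  · exact absurd (h ▸ hσ) h2
  · exact absurd (h ▸ hπ) h1
  · exact ijFix_injOn (moved σ hσ h1) (moved π hπ h2) h

theorem TCycleIntersecting.ijFix_left {n t : ℕ} {F : Finset (Perm (Fin n))}
    (hF : TCycleIntersecting t (F : Set (Perm (Fin n)))) {i j : Fin n} (hij : i ≠ j)
    {σ π : Perm (Fin n)} (hσ : σ ∈ F) (hσ' : σ i = j) (hπ : π ∈ F) (hπ' : ijFix i j π ∈ F) :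
    ∃ 𝒞 : Finset (Finset (Fin n)),
      t ≤ 𝒞.card ∧ (∀ B ∈ 𝒞, IsCommonCycle (ijFix i j σ) π B) ∧
      (𝒞 : Set (Finset (Fin n))).Pairwise fun A B => Disjoint A B := by
  by_cases h : π i = j
  · obtain ⟨𝒞, hc, hcyc, hd⟩ := hF σ hσ _ hπ'
    refine ⟨𝒞, hc, fun B hB => ?_, hd⟩
    have hB' := hcyc B hB
    have hi : i ∉ B := fun hi => by
      have := hB'.2.2.2.1 i hi
      rw [hσ', ijFix_apply_self h] at this
      exact hij this.symm
    refine hB'.congr (hB'.ijFix_congr hi j) fun x hx => (ijFix_apply_of_ne ?_ ?_).symm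
    · rintro rfl
      exact hi hx
    · intro e
      have hj := hB'.2.2.1 x hx
      rw [ijFix_apply_of_apply_eq h e, ← hσ'] at hj
      exact hi (hB'.inv_mem hj)
  · obtain ⟨𝒞, hc, hcyc, hd⟩ := hF σ hσ π hπ
    refine ⟨𝒞, hc, fun B hB => ?_, hd⟩
    have hB' := hcyc B hB
    have hi : i ∉ B := fun hi => h ((hB'.2.2.2.1 i hi).symm.trans hσ')
    exact hB'.congr (hB'.ijFix_congr hi j) fun _ _ => rfl

theorem TCycleIntersecting.ijFix_both {n t : ℕ} {F : Finset (Perm (Fin n))}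
    (hF : TCycleIntersecting t (F : Set (Perm (Fin n)))) {i j : Fin n}
    {σ π : Perm (Fin n)} (hσ : σ ∈ F) (hσ' : σ i = j) (hπ : π ∈ F) (hπ' : π i = j) :
    ∃ 𝒞 : Finset (Finset (Fin n)),
      t ≤ 𝒞.card ∧ (∀ B ∈ 𝒞, IsCommonCycle (ijFix i j σ) (ijFix i j π) B) ∧
      (𝒞 : Set (Finset (Fin n))).Pairwise fun A B => Disjoint A B := by
  obtain ⟨𝒞, hc, hcyc, hd⟩ := hF σ hσ π hπ
  let f : Finset (Fin n) → Finset (Fin n) := fun B => if i ∈ B then {i} else B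
  have hsub : ∀ B, f B ⊆ B := by
    intro B
    simp only [f]
    split_ifs with h
    · exact singleton_subset_iff.2 h
    · rfl
  have hcyc' : ∀ B ∈ 𝒞, IsCommonCycle (ijFix i j σ) (ijFix i j π) (f B) := by
    intro B hB
    simp only [f]
    split_ifs with h
    · exact isCommonCycle_singleton (ijFix_apply_self hσ') (ijFix_apply_self hπ')
    · exact (hcyc B hB).congr ((hcyc B hB).ijFix_congr h j) ((hcyc B hB).symm.ijFix_congr h j)
  have hdisj : ∀ A ∈ 𝒞, ∀ B ∈ 𝒞, A ≠ B → Disjoint (f A) (f B) := fun A hA B hB hne =>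
    disjoint_of_subset_left (hsub A) (disjoint_of_subset_right (hsub B) (hd hA hB hne))
  refine ⟨𝒞.image f, ?_, ?_, ?_⟩
  · rw [card_image_of_injOn]
    · exact hc
    · intro A hA B hB e
      by_contra hne
      have := hdisj A hA B hB hne
      rw [← e, disjoint_self_iff_empty] at this
      exact (hcyc' A hA).1.ne_empty this
  · intro B hB
    obtain ⟨A, hA, rfl⟩ := mem_image.1 hB
    exact hcyc' A hA
  · intro A' hA' B' hB' hne
    obtain ⟨A, hA, rfl⟩ := mem_image.1 (mem_coe.1 hA')
    obtain ⟨B, hB, rfl⟩ := mem_image.1 (mem_coe.1 hB')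
    exact hdisj A hA B hB fun e => hne (e ▸ rfl)

theorem TCycleIntersecting.image_fixMember {n t : ℕ} {F : Finset (Perm (Fin n))}
    (hF : TCycleIntersecting t (F : Set (Perm (Fin n)))) {i j : Fin n} (hij : i ≠ j) :
    TCycleIntersecting t (F.image (fixMember i j F) : Set (Perm (Fin n))) := by
  have moved : ∀ σ ∈ F, ijFix i j σ ∉ F → σ i = j := fun σ hσ h => by
    by_contra hne
    rw [ijFix_of_ne hne] at h
    exact h hσ
  intro σ' hσ' π' hπ'
  obtain ⟨σ, hσ, rfl⟩ := mem_image.1 (mem_coe.1 hσ')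
  obtain ⟨π, hπ, rfl⟩ := mem_image.1 (mem_coe.1 hπ')
  unfold fixMember
  split_ifs with h1 h2 h2
  · exact hF σ hσ π hπ
  · obtain ⟨𝒞, hc, hcyc, hd⟩ := hF.ijFix_left hij hπ (moved π hπ h2) hσ h1
    exact ⟨𝒞, hc, fun B hB => (hcyc B hB).symm, hd⟩
  · exact hF.ijFix_left hij hσ (moved σ hσ h1) hπ h2
  · exact hF.ijFix_both hσ (moved σ hσ h1) hπ (moved π hπ h2)

theorem mem_fixSet {n : ℕ} {σ : Perm (Fin n)} {x : Fin n} : x ∈ fixSet σ ↔ σ x = x := by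
  simp [fixSet]

theorem fixSet_ssubset_ijFix {n : ℕ} {i j : Fin n} (hij : i ≠ j) {σ : Perm (Fin n)}
    (h : σ i = j) : fixSet σ ⊂ fixSet (ijFix i j σ) := by
  refine (ssubset_iff_of_subset fun x hx => ?_).2
    ⟨i, mem_fixSet.2 (ijFix_apply_self h), fun hi => hij ((mem_fixSet.1 hi).symm.trans h)⟩
  rw [mem_fixSet] at hx ⊢
  have hxi : x ≠ i := fun e => hij (by rw [← h, ← e, hx])
  rw [ijFix_apply_of_ne hxi (by rwa [hx]), hx]

/-- In a family closed under fixing, the sets of fixed points intersect. -/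
theorem TCycleIntersecting.le_card_fixSet_inter {n t : ℕ} {F : Finset (Perm (Fin n))}
    (hF : TCycleIntersecting t (F : Set (Perm (Fin n))))
    (hc : ∀ i j : Fin n, i ≠ j → ∀ σ ∈ F, ijFix i j σ ∈ F) {π : Perm (Fin n)} (hπ : π ∈ F)
    {σ : Perm (Fin n)} (hσ : σ ∈ F) : t ≤ #(fixSet σ ∩ fixSet π) := by
  induction hk : n - #(fixSet σ) using Nat.strong_induction_on generalizing σ with
  | _ k ih =>
    by_cases h : ∃ i, σ i = π i ∧ σ i ≠ i
    · obtain ⟨i, hi, hi'⟩ := h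
      have hss := fixSet_ssubset_ijFix hi'.symm (rfl : σ i = σ i)
      have hlt := card_lt_card hss
      have hle := card_le_univ (fixSet (ijFix i (σ i) σ))
      rw [Fintype.card_fin] at hle
      refine (ih _ (by omega) (hc i (σ i) hi'.symm σ hσ) rfl).trans (card_le_card fun x hx => ?_)
      rw [mem_inter, mem_fixSet, mem_fixSet] at hx ⊢
      refine ⟨?_, hx.2⟩
      have hxi : x ≠ i := fun e => hi' (by rw [hi, ← e, hx.2])
      by_cases hxσ : σ x = i
      · have : π x = π i := by
          rw [← hi, ← ijFix_apply_of_apply_eq (rfl : σ i = σ i) hxσ, hx.1, hx.2]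
        exact absurd (π.injective this) hxi
      · rw [← ijFix_apply_of_ne (j := σ i) hxi hxσ, hx.1]
    · push Not at h
      obtain ⟨𝒞, hcard, hcyc, hd⟩ := hF σ hσ π hπ
      refine hcard.trans (card_le_of_pairwise_disjoint_of_meets hd fun B hB => ?_)
      obtain ⟨x, hx⟩ := (hcyc B hB).1
      have hag := (hcyc B hB).2.2.2.1 x hx
      have hfx := h x hag
      exact ⟨x, hx, mem_inter.2 ⟨mem_fixSet.2 hfx, mem_fixSet.2 (hag ▸ hfx)⟩⟩

/-- Every permutation fixing `T` has a partner fixing `T` that disagrees with it elsewhere. -/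
theorem exists_perm_disagree {n : ℕ} {T : Finset (Fin n)} (hT : #T + 2 ≤ n)
    {τ : Perm (Fin n)} (hτ : ∀ x ∈ T, τ x = x) :
    ∃ τ' : Perm (Fin n), (∀ x ∈ T, τ' x = x) ∧ ∀ x ∉ T, τ' x ≠ τ x := by
  obtain ⟨c, hc, hsupp⟩ := exists_cycleOn (Tᶜ : Finset (Fin n))
  have hcT : ∀ x ∈ T, c x = x := fun x hx => by
    by_contra h
    exact mem_compl.1 (hsupp (Perm.mem_support.2 h)) hx
  have hnt : (↑(Tᶜ : Finset (Fin n)) : Set (Fin n)).Nontrivial := by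
    rw [Finset.nontrivial_coe, ← one_lt_card_iff_nontrivial, card_compl, Fintype.card_fin]
    omega
  refine ⟨τ * c, fun x hx => by rw [Perm.mul_apply, hcT x hx, hτ x hx], fun x hx e => ?_⟩
  exact hc.apply_ne hnt (by simpa using hx) (τ.injective e)

/-- If fixing a family produces the stabilizer of `t` points, the family is that stabilizer. -/
theorem TCycleIntersecting.stabilizer_subset {n t : ℕ} {F : Finset (Perm (Fin n))}
    (hF : TCycleIntersecting t (F : Set (Perm (Fin n)))) (hn : t + 2 ≤ n) (ht : 0 < t)
    {i j : Fin n} (hij : i ≠ j) {T : Finset (Fin n)} (hT : #T = t)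
    (him : ∀ σ : Perm (Fin n), σ ∈ F.image (fixMember i j F) ↔ ∀ x ∈ T, σ x = x)
    {τ : Perm (Fin n)} (hτ : ∀ x ∈ T, τ x = x) : τ ∈ F := by
  have source : ∀ ρ : Perm (Fin n), (∀ x ∈ T, ρ x = x) →
      ρ ∈ F ∨ ∃ σ ∈ F, σ i = j ∧ ijFix i j σ = ρ := fun ρ hρ => by
    obtain ⟨σ, hσ, e⟩ := mem_image.1 ((him ρ).2 hρ)
    unfold fixMember at e
    split_ifs at e with h
    · exact Or.inl (e ▸ hσ)
    · refine Or.inr ⟨σ, hσ, ?_, e⟩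
      by_contra hne
      rw [ijFix_of_ne hne] at h
      exact h hσ
  by_contra hτF
  obtain ⟨σ, hσ, hσi, rfl⟩ := (source τ hτ).resolve_left hτF
  obtain ⟨τ', hτ', hne⟩ := exists_perm_disagree (by omega) hτ
  suffices h : ∃ π ∈ F, ∃ z ∈ T, ∀ B, IsCommonCycle σ π B → ∃ x ∈ B, x ∈ T.erase z by
    obtain ⟨π, hπ, z, hz, hB⟩ := h
    obtain ⟨𝒞, hcard, hcyc, hd⟩ := hF σ hσ π hπ
    have := card_le_of_pairwise_disjoint_of_meets hd fun B hB' => hB B (hcyc B hB')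
    rw [card_erase_of_mem hz] at this
    omega
  have hfi : ijFix i j σ i = i := ijFix_apply_self hσi
  by_cases hiT : i ∈ T
  · have hbase : ∃ π ∈ F, ∀ x ∉ T, σ x ≠ π x := by
      have hstab : ∀ ρ : Perm (Fin n), (∀ x ∈ T, ρ x = x) → ∀ x ∉ T, ρ x ≠ i := by
        intro ρ hρ x hx e
        rw [← hρ i hiT] at e
        exact hx (ρ.injective e ▸ hiT)
      rcases source τ' hτ' with h | ⟨σ', h, hσ'i, rfl⟩
      · refine ⟨τ', h, fun x hx e => ?_⟩
        have hxi : x ≠ i := fun e => hx (e ▸ hiT)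
        have hx2 : σ x ≠ i := e ▸ hstab τ' hτ' x hx
        exact hne x hx (by rw [ijFix_apply_of_ne hxi hx2, e])
      · refine ⟨σ', h, fun x hx e => ?_⟩
        have hxi : x ≠ i := fun e => hx (e ▸ hiT)
        by_cases hx2 : σ x = i
        · exact hne x hx (by
            rw [ijFix_apply_of_apply_eq hσi hx2, ijFix_apply_of_apply_eq hσ'i (e ▸ hx2)])
        · exact hne x hx (by
            rw [ijFix_apply_of_ne hxi hx2, ijFix_apply_of_ne hxi (e ▸ hx2), e])
    obtain ⟨π, hπ, hdis⟩ := hbase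
    refine ⟨π, hπ, i, hiT, fun B hB => ?_⟩
    have hsub : ∀ x ∈ B, x ∈ T := fun x hx => by
      by_contra h
      exact hdis x h (hB.2.2.2.1 x hx)
    by_cases hiB : i ∈ B
    · have hj : j ∈ B := hσi ▸ hB.2.1 i hiB
      exact ⟨j, hj, mem_erase.2 ⟨hij.symm, hsub j hj⟩⟩
    · obtain ⟨x, hx⟩ := hB.1
      exact ⟨x, hx, mem_erase.2 ⟨fun e => hiB (e ▸ hx), hsub x hx⟩⟩
  · by_cases hjT : j ∈ T
    · have hσ' : σ⁻¹ i = j := by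
        have h1 := ijFix_apply_of_apply_eq hσi (y := σ⁻¹ i) (by simp)
        exact (ijFix i j σ).injective (h1.trans (hτ j hjT).symm)
      have hσj : σ j = i := by rw [← hσ']; simp
      have hτ'F : τ' ∈ F := by
        refine (source τ' hτ').resolve_right ?_
        rintro ⟨σ', -, hσ'i, rfl⟩
        exact hne i hiT (by rw [ijFix_apply_self hσ'i, hfi])
      refine ⟨τ', hτ'F, j, hjT, fun B hB => ?_⟩
      have hjB : j ∉ B := fun h => by
        have := hB.2.2.2.1 j h
        rw [hσj, hτ' j hjT] at this
        exact hij this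
      have hiB : i ∉ B := fun h => hjB (hσi ▸ hB.2.1 i h)
      obtain ⟨x, hx⟩ := hB.1
      refine ⟨x, hx, mem_erase.2 ⟨fun e => hjB (e ▸ hx), ?_⟩⟩
      by_contra h
      exact hne x h (by rw [hB.ijFix_congr hiB j x hx, hB.2.2.2.1 x hx])
    · exfalso
      have hσT : ∀ x ∈ T, σ x = x := fun x hx => by
        have hxi : x ≠ i := fun e => hiT (e ▸ hx)
        have hx2 : σ x ≠ i := fun e => by
          have h1 := ijFix_apply_of_apply_eq hσi e
          rw [hτ x hx] at h1
          exact hjT (h1 ▸ hx)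
        rw [← ijFix_apply_of_ne (j := j) hxi hx2, hτ x hx]
      obtain ⟨ρ, hρ, e⟩ := mem_image.1 ((him σ).2 hσT)
      unfold fixMember at e
      split_ifs at e with h
      · exact hτF (e ▸ h)
      · have hρi : ρ i = j := by
          by_contra hne
          rw [ijFix_of_ne hne] at h
          exact h hρ
        rw [← e, ijFix_apply_self hρi] at hσi
        exact hij hσi

theorem TCycleIntersecting.card_bound {n t : ℕ} (ht : 0 < t) (hn : 2 * t + 1 ≤ n)
    {F : Finset (Perm (Fin n))} (hF : TCycleIntersecting t (F : Set (Perm (Fin n)))) :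
    #F ≤ (n - t).factorial ∧ (#F = (n - t).factorial →
      ∃ T : Finset (Fin n), #T = t ∧ F = univ.filter fun σ : Perm (Fin n) => ∀ x ∈ T, σ x = x) := by
  induction hk : #F * n - ∑ σ ∈ F, #(fixSet σ) using Nat.strong_induction_on
    generalizing F with
  | _ k ih =>
    by_cases hc : ∀ i j : Fin n, i ≠ j → ∀ σ ∈ F, ijFix i j σ ∈ F
    · have hG : SetIntersecting t (F.image fixSet) := by
        intro A hA B hB
        obtain ⟨σ, hσ, rfl⟩ := mem_image.1 hA
        obtain ⟨π, hπ, rfl⟩ := mem_image.1 hB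
        exact hF.le_card_fixSet_inter hc hπ hσ
      have hle := card_le_derangementWeight F
      obtain ⟨hw, huniq⟩ := hG.derangementWeight_bound ht hn
      refine ⟨hle.trans hw, fun h => ?_⟩
      obtain ⟨T, hT, hsub⟩ := huniq (le_antisymm hw (h ▸ hle))
      refine ⟨T, hT, eq_of_subset_of_card_le (fun σ hσ => ?_) ?_⟩
      · exact mem_filter.2 ⟨mem_univ _, fun x hx =>
          mem_fixSet.1 (hsub _ (mem_image_of_mem _ hσ) hx)⟩
      · rw [card_filter_fix_eq, hT, h]
    · push Not at hc
      obtain ⟨i, j, hij, σ₀, hσ₀, hσ₀'⟩ := hc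
      have hcard : #(F.image (fixMember i j F)) = #F := card_image_of_injOn (fixMember_injOn i j F)
      have hlt : ∑ σ ∈ F, #(fixSet σ) < ∑ σ ∈ F.image (fixMember i j F), #(fixSet σ) := by
        rw [sum_image (fixMember_injOn i j F)]
        have moved : ∀ σ ∈ F, ijFix i j σ ∉ F → #(fixSet σ) < #(fixSet (fixMember i j F σ)) := by
          intro σ hσ h
          rw [fixMember, if_neg h]
          refine card_lt_card (fixSet_ssubset_ijFix hij ?_)
          by_contra hne
          rw [ijFix_of_ne hne] at h
          exact h hσ
        refine sum_lt_sum (fun σ hσ => ?_) ⟨σ₀, hσ₀, moved σ₀ hσ₀ hσ₀'⟩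
        by_cases h : ijFix i j σ ∈ F
        · rw [fixMember, if_pos h]
        · exact (moved σ hσ h).le
      have hbd : ∑ σ ∈ F.image (fixMember i j F), #(fixSet σ) ≤ #F * n := by
        rw [← hcard, ← smul_eq_mul]
        refine sum_le_card_nsmul _ _ _ fun σ _ => ?_
        simpa using card_le_univ (fixSet σ)
      obtain ⟨hle, heq⟩ := ih _ (by rw [hcard]; omega) (hF.image_fixMember hij) rfl
      rw [hcard] at hle heq
      refine ⟨hle, fun h => ?_⟩
      obtain ⟨T, hT, e⟩ := heq h
      refine ⟨T, hT, (eq_of_subset_of_card_le (fun τ hτ => ?_) ?_).symm⟩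
      · refine hF.stabilizer_subset (by omega) ht hij hT (fun σ => ?_) (mem_filter.1 hτ).2
        simp [e]
      · rw [card_filter_fix_eq, hT, h]

/-- If `n ≥ 2t+1` and `F` is a `t`-cycle-intersecting family of permutations of `[n]`,
then `|F| ≤ (n-t)!`, with equality iff `F` is the stabilizer of `t` points. -/
theorem stmt0 {n t : ℕ} (ht : 0 < t) (hn : 2 * t + 1 ≤ n)
    (F : Set (Equiv.Perm (Fin n))) (hF : TCycleIntersecting t F) :
    F.ncard ≤ Nat.factorial (n - t) ∧
      (F.ncard = Nat.factorial (n - t) ↔ IsTPointStabilizer t F) := by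
  have hF' : TCycleIntersecting t (F.toFinset : Set (Perm (Fin n))) := by rwa [Set.coe_toFinset]
  obtain ⟨hle, heq⟩ := hF'.card_bound ht hn
  rw [Set.ncard_eq_toFinset_card']
  refine ⟨hle, fun h => ?_, ?_⟩
  · obtain ⟨T, hT, e⟩ := heq h
    refine ⟨(T.orderEmbOfFin hT).toEmbedding, Set.ext fun σ => ?_⟩
    rw [← Set.mem_toFinset, e, mem_filter, Set.mem_ofPred_eq]
    refine ⟨fun h k => h.2 _ (T.orderEmbOfFin_mem hT k), fun h => ⟨mem_univ _, fun x hx => ?_⟩⟩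
    obtain ⟨k, rfl⟩ : x ∈ Set.range (T.orderEmbOfFin hT) := by simpa using hx
    exact h k
  · rintro ⟨a, rfl⟩
    have := card_filter_fix_eq (univ.map a)
    rw [card_map, card_univ, Fintype.card_fin] at this
    rw [← this]
    congr 1
    ext σ
    simp
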